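/- Suppose all edge weights are positive and the first n−1 edges form a rooted in-branching with root the vertex indexed n−1. Let Nτ be any m×(m−n+1) real matrix satisfying R * Nτ = 0 and Nτᵀ * Nτ = I (its columns form an orthonormal basis of the null space of R), and let V be the m×m matrix whose first n−1 columns are the columns of Rᵀ and whose remaining columns are those of Nτ. Then V is invertible, and V⁻¹ * Le * V equals the m×m block matrix whose upper-left (n−1)×(n−1) block is Eτᵀ * A * W * Rᵀ, whose upper-right (n−1)×(m−n+1) block is Eτᵀ * A * W * Nτ, and whose bottom m−n+1 rows are zero. (I.e., Le is similar to this block upper-triangular matrix.) -/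

import Mathlib

open Matrix

theorem aux_sum_split (p q m : ℕ) (h : m = p + q) (f : Fin m → ℝ) :
    ∑ k, f k = ∑ i : Fin p, f ⟨i.val, by omega⟩ + ∑ j : Fin q, f ⟨p + j.val, by omega⟩ := by
  subst h
  rw [Fin.sum_univ_add]
  rfl

theorem aux_gram {p n : ℕ} (B : Matrix (Fin n) (Fin p) ℝ) (h : Function.Injective B.mulVec) :
    IsUnit (Bᵀ * B).det := by
  have := (Matrix.PosDef.conjTranspose_mul_self B h).isUnit
  rw [Matrix.conjTranspose_eq_transpose_of_trivial] at this
  exact (Matrix.isUnit_iff_isUnit_det _).1 this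

/-- For a weighted digraph with positive weights whose first `n-1` edges
form a rooted in-branching with root the vertex `n-1`, the edge Laplacian
`Le = Eᵀ * A * W` is similar, via the matrix `V = [Rᵀ Nτ]` (where the columns of `Nτ`
form an orthonormal basis of the null space of `R`), to the block upper-triangular
matrix with top blocks `Eτᵀ * A * W * Rᵀ`, `Eτᵀ * A * W * Nτ` and zero bottom rows. -/
theorem edgeLaplacian_similar_block_triangular
    (n m : ℕ) (hn : 2 ≤ n) (hm : 1 ≤ m) (hmn : n - 1 ≤ m)
    (tail head : Fin m → Fin n) (hth : ∀ e, tail e ≠ head e)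
    (w : Fin m → ℝ) (hw : ∀ e, 0 < w e)
    (E : Matrix (Fin n) (Fin m) ℝ)
    (hE : ∀ v e, E v e = if v = tail e then 1 else if v = head e then -1 else 0)
    (A : Matrix (Fin n) (Fin m) ℝ)
    (hA : ∀ v e, A v e = if v = tail e then 1 else 0)
    (W : Matrix (Fin m) (Fin m) ℝ) (hW : W = Matrix.diagonal w)
    (Le : Matrix (Fin m) (Fin m) ℝ) (hLe : Le = Eᵀ * A * W)
    (root : Fin n) (hroot : root = ⟨n - 1, by omega⟩)
    -- the first n-1 edges form a rooted in-branching with root `root`: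
    (hinj : Function.Injective (fun i : Fin (n - 1) => tail ⟨i.val, lt_of_lt_of_le i.2 hmn⟩))
    (hnotroot : ∀ i : Fin (n - 1), tail ⟨i.val, lt_of_lt_of_le i.2 hmn⟩ ≠ root)
    (hsurj : ∀ v : Fin n, v ≠ root → ∃ i : Fin (n - 1), tail ⟨i.val, lt_of_lt_of_le i.2 hmn⟩ = v)
    (hreach : ∀ v : Fin n, Relation.ReflTransGen
      (fun a b => ∃ e : Fin m, e.val < n - 1 ∧ tail e = a ∧ head e = b) v root)
    (Eτ : Matrix (Fin n) (Fin (n - 1)) ℝ)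
    (hEτ : Eτ = E.submatrix id (fun i : Fin (n - 1) => ⟨i.val, lt_of_lt_of_le i.2 hmn⟩))
    (Ec : Matrix (Fin n) (Fin (m - (n - 1))) ℝ)
    (hEc : Ec = E.submatrix id
      (fun j : Fin (m - (n - 1)) => ⟨n - 1 + j.val, by have := j.2; omega⟩))
    (Tτ : Matrix (Fin (n - 1)) (Fin (m - (n - 1))) ℝ)
    (hTτ : Tτ = (Eτᵀ * Eτ)⁻¹ * Eτᵀ * Ec)
    (R : Matrix (Fin (n - 1)) (Fin m) ℝ)
    (hR : ∀ (i : Fin (n - 1)) (j : Fin m), R i j =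
      if h : j.val < n - 1 then (if i.val = j.val then 1 else 0)
      else Tτ i ⟨j.val - (n - 1), by have := j.2; omega⟩)
    (Nτ : Matrix (Fin m) (Fin (m - (n - 1))) ℝ)
    (hN1 : R * Nτ = 0) (hN2 : Nτᵀ * Nτ = 1)
    (V : Matrix (Fin m) (Fin m) ℝ)
    (hV : ∀ (i j : Fin m), V i j =
      if h : j.val < n - 1 then Rᵀ i ⟨j.val, h⟩
      else Nτ i ⟨j.val - (n - 1), by have := j.2; omega⟩) :
    IsUnit V ∧
    ∀ (i j : Fin m), (V⁻¹ * Le * V) i j =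
      if hi : i.val < n - 1 then
        (if hj : j.val < n - 1 then (Eτᵀ * A * W * Rᵀ) ⟨i.val, hi⟩ ⟨j.val, hj⟩
         else (Eτᵀ * A * W * Nτ) ⟨i.val, hi⟩ ⟨j.val - (n - 1), by have := j.2; omega⟩)
      else 0 := by
  have hq : m = (n - 1) + (m - (n - 1)) := by omega
  -- reachability gives potentials
  have hpot : ∀ v : Fin n, ∃ c : Fin (n - 1) → ℝ,
      Eτ *ᵥ c = Pi.single v 1 - Pi.single root 1 := by
    intro v
    induction hreach v using Relation.ReflTransGen.head_induction_on with
    | refl => exact ⟨0, by simp⟩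
    | head hab _ ih =>
      obtain ⟨e, he, rfl, rfl⟩ := hab
      obtain ⟨c, hc⟩ := ih
      refine ⟨Pi.single ⟨e.val, he⟩ 1 + c, ?_⟩
      rw [Matrix.mulVec_add, hc]
      ext u
      have := hth e
      simp only [Matrix.mulVec_single_one, hEτ, Pi.add_apply, Pi.sub_apply, Matrix.col_apply,
        Matrix.submatrix_apply, id, hE, Pi.single_apply]
      by_cases h1 : u = tail e
      · have h2 : u ≠ head e := h1 ▸ this
        simp [h1, this, sub_eq_add_neg]
      · by_cases h2 : u = head e <;> simp [h1, h2]
        grind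
  choose c hc using hpot
  have hinjE : Function.Injective Eτ.mulVec := by
    let t : Fin (n - 1) → Fin n := fun i => tail ⟨i.val, lt_of_lt_of_le i.2 hmn⟩
    let D : Matrix (Fin (n - 1)) (Fin (n - 1)) ℝ := fun k i => c (t i) k
    have h1 : Eτ.submatrix t id * D = 1 := by
      ext j i
      have := congrFun (hc (t i)) (t j)
      have h3 : (Eτ.submatrix t id * D) j i = (Eτ *ᵥ c (t i)) (t j) := rfl
      rw [h3, this]
      have h4 : t j ≠ root := hnotroot j
      have h5 : t j = t i ↔ j = i := hinj.eq_iff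
      simp [Pi.single_apply, Matrix.one_apply, h4, h5]
    have h2 : D * Eτ.submatrix t id = 1 := mul_eq_one_comm.1 h1
    intro x y hxy
    have h3 : Eτ.submatrix t id *ᵥ x = Eτ.submatrix t id *ᵥ y := by
      ext j
      exact congrFun hxy (t j)
    have h4 := congrArg (D *ᵥ ·) h3
    simpa [Matrix.mulVec_mulVec, h2] using h4
  have hG := aux_gram Eτ hinjE
  have hEcT : Eτ * Tτ = Ec := by
    obtain ⟨C, hC⟩ : ∃ C : Matrix (Fin (n - 1)) (Fin (m - (n - 1))) ℝ, Ec = Eτ * C := by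
      refine ⟨fun k j => c (tail ⟨n - 1 + j.val, by have := j.2; omega⟩) k
        - c (head ⟨n - 1 + j.val, by have := j.2; omega⟩) k, ?_⟩
      ext v j
      set e : Fin m := ⟨n - 1 + j.val, by have := j.2; omega⟩ with he
      change _ = (Eτ *ᵥ (c (tail e) - c (head e))) v
      rw [Matrix.mulVec_sub, hc, hc, hEc]
      have := hth e
      simp only [Pi.sub_apply, Matrix.submatrix_apply, id, hE, Pi.single_apply, ← he]
      by_cases h1 : v = tail e
      · simp [h1, this]
      · by_cases h2 : v = head e <;> simp [h1, h2]
        grind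
    rw [hTτ, hC, Matrix.mul_assoc _ Eτᵀ, ← Matrix.mul_assoc Eτᵀ, ← Matrix.mul_assoc _ (Eτᵀ * Eτ),
      Matrix.nonsing_inv_mul _ hG, Matrix.one_mul]
  have hER : E = Eτ * R := by
    ext v j
    rw [Matrix.mul_apply]
    by_cases hj : j.val < n - 1
    · rw [Finset.sum_eq_single ⟨j.val, hj⟩]
      · simp [hR, hj, hEτ]
      · intro b _ hb
        have : b.val ≠ j.val := fun h => hb (Fin.ext h)
        simp [hR, hj, this]
      · simp
    · have h1 : E v j = Ec v ⟨j.val - (n - 1), by have := j.2; omega⟩ := by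
        rw [hEc]
        simp only [Matrix.submatrix_apply, id]
        congr 1
        ext
        simp
        omega
      rw [h1, ← hEcT, Matrix.mul_apply]
      simp [hR, hj]
  have hVu : IsUnit V := by
    rw [← Matrix.mulVec_injective_iff_isUnit]
    rw [← Matrix.coe_mulVecLin, ← LinearMap.ker_eq_bot, LinearMap.ker_eq_bot']
    intro x hx
    let a : Fin (n - 1) → ℝ := fun i => x ⟨i.val, by omega⟩
    let b : Fin (m - (n - 1)) → ℝ := fun j => x ⟨n - 1 + j.val, by omega⟩
    have h1 : Rᵀ *ᵥ a + Nτ *ᵥ b = 0 := by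
      rw [← hx]
      ext i
      simp only [Matrix.coe_mulVecLin, Pi.add_apply, Matrix.mulVec, dotProduct]
      rw [aux_sum_split _ _ _ hq]
      simp [hV, a, b]
    have h2 : Rᵀ *ᵥ a = 0 := by
      have h3 := congrArg (R *ᵥ ·) h1
      simp only [Matrix.mulVec_add, Matrix.mulVec_mulVec, hN1, Matrix.zero_mulVec, add_zero,
        Matrix.mulVec_zero] at h3
      have h4 : (Rᵀ *ᵥ a) ⬝ᵥ (Rᵀ *ᵥ a) = 0 := by
        rw [Matrix.dotProduct_mulVec, Matrix.vecMul_transpose, Matrix.mulVec_mulVec, h3,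
          zero_dotProduct]
      exact dotProduct_self_eq_zero.1 h4
    have ha : a = 0 := by
      ext i
      have := congrFun h2 ⟨i.val, by omega⟩
      simp only [Matrix.mulVec, dotProduct, Matrix.transpose_apply, hR, i.2, dite_true] at this
      rw [Finset.sum_eq_single i] at this
      · simpa using this
      · intro k _ hk
        have : k.val ≠ i.val := fun h => hk (Fin.ext h)
        simp [this]
      · simp
    have hb : b = 0 := by
      rw [h2, zero_add] at h1
      have h3 := congrArg (Nτᵀ *ᵥ ·) h1
      simpa [Matrix.mulVec_mulVec, hN2] using h3
    ext k
    by_cases hk : k.val < n - 1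
    · exact congrFun ha ⟨k.val, hk⟩
    · have := congrFun hb ⟨k.val - (n - 1), by omega⟩
      have e : (⟨n - 1 + (k.val - (n - 1)), by omega⟩ : Fin m) = k := by ext; simp; omega
      simpa [b, e] using this
  refine ⟨hVu, ?_⟩
  let B : Matrix (Fin m) (Fin m) ℝ := fun i j =>
    if hi : i.val < n - 1 then (Eτᵀ * A * W * V) ⟨i.val, hi⟩ j else 0
  have hB : Le * V = V * B := by
    have h1 : Le * V = Rᵀ * (Eτᵀ * A * W * V) := by
      rw [hLe, hER, Matrix.transpose_mul]
      simp only [Matrix.mul_assoc]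
    rw [h1]
    ext i j
    rw [Matrix.mul_apply, Matrix.mul_apply, aux_sum_split _ _ _ hq]
    simp [hV, B]
  have hfin : V⁻¹ * Le * V = B := by
    rw [Matrix.mul_assoc, hB, ← Matrix.mul_assoc,
      Matrix.nonsing_inv_mul _ ((Matrix.isUnit_iff_isUnit_det _).1 hVu), Matrix.one_mul]
  intro i j
  rw [hfin]
  by_cases hi : i.val < n - 1
  · by_cases hj : j.val < n - 1
    · simp only [B, hi, hj, dite_true]
      rw [Matrix.mul_apply, Matrix.mul_apply]
      simp [hV, hj]
    · simp only [B, hi, hj, dite_true, dite_false]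
      rw [Matrix.mul_apply, Matrix.mul_apply]
      simp [hV, hj]
  · simp [B, hi]
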